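/- Let Γ be a regular nicely distance-balanced graph with valency k = 3, diameter d ≥ 3 and γ(Γ) = d+1. Then d ≠ 4. -/

import Mathlib

open SimpleGraph Finset

/-- `W_{u,v}`: the set of vertices strictly closer to `u` than to `v`. -/
noncomputable def ndbW {V : Type*} [Fintype V] (G : SimpleGraph V) (u v : V) : Finset V :=
  Finset.univ.filter fun x => G.dist x u < G.dist x v

/-- `D^i_j(u,v)`: the set of vertices at distance `i` from `u` and `j` from `v`. -/
noncomputable def ndbD {V : Type*} [Fintype V] (G : SimpleGraph V) (u v : V) (i j : ℕ) : Finset V :=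
  Finset.univ.filter fun x => G.dist x u = i ∧ G.dist x v = j

/-- `G` is nicely distance-balanced with constant `γ`. -/
def IsNDB {V : Type*} [Fintype V] (G : SimpleGraph V) (γ : ℕ) : Prop :=
  ∀ u v : V, G.Adj u v → (ndbW G u v).card = γ ∧ (ndbW G v u).card = γ

/-- `G` has diameter `d`. -/
def HasDiam {V : Type*} [Fintype V] (G : SimpleGraph V) (d : ℕ) : Prop :=
  (∀ u v : V, G.dist u v ≤ d) ∧ ∃ u v : V, G.dist u v = d

/-!
Let the diameter be `4`, so that `γ = 5`.

Given a triangle `abc`, every vertex is in exactly one of `W_{a,b}`, `W_{b,c}`, `W_{c,a}` or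
equidistant from the corners, so the order is `3γ + r` with `r` equidistant vertices. A cubic graph
has even order, hence `r` is odd, and applying the NDB condition to the edge leaving the triangle at
`a` bounds the number of vertices closest to `a`, which forces `r = 1`. The four vertices other than
`a` in `W_{a,b}` then have only two edges to the rest of the graph, so two of them are adjacent
twins `m`, `n` with `W_{m,n} = {m}`.

Hence the graph is triangle-free. If `d(x,y) = 4` and `a ~ x` is on a geodesic to `y`, then
`W_{a,x}` consists of `a`, the two other neighbours of `a`, and one vertex each at distance `2` and
`3` from `a`. It follows that `y` is the only vertex at distance `4` from `x`, that every vertex is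
on a geodesic from `x` to `y`, and that each vertex at distance `2` from `x` has one neighbour near
`x` (its foot), one near `y`, and one at distance `2` from both (its mate). Take `a ~ x`, a child
`u` of `a`, the foot `c` of the mate of `u`, and the third neighbour `e` of `x`: then `W_{a,u}`
contains `a`, `x`, the other child of `a`, `e` and the two children of `e`, one vertex too many.
-/

section Distance

variable {V : Type*} {G : SimpleGraph V} {u v : V}

theorem dist_le_dist_add_one_right (h : G.Adj u v) (w : V) : G.dist w u ≤ G.dist w v + 1 := by
  have := h.diff_dist_adj (u := w)
  omega

theorem dist_le_dist_add_one_left (h : G.Adj u v) (w : V) : G.dist u w ≤ G.dist v w + 1 := by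
  simpa only [G.dist_comm (v := w)] using dist_le_dist_add_one_right h w

theorem exists_adj_dist_eq {n : ℕ} (h : G.dist u v = n + 1) :
    ∃ w, G.Adj u w ∧ G.dist w v = n := by
  obtain ⟨p, hp⟩ := exists_walk_of_dist_ne_zero (h.trans_ne n.succ_ne_zero)
  cases p with
  | nil => simp at h
  | cons huw q =>
    have hle := dist_le q
    have hge := dist_le_dist_add_one_left huw v
    rw [Walk.length_cons] at hp
    exact ⟨_, huw, by omega⟩

theorem exists_adj_dist_add_one_eq (hconn : G.Connected) (hne : u ≠ v) :
    ∃ w, G.Adj u w ∧ G.dist w v + 1 = G.dist u v := by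
  have hpos := hconn.pos_dist_of_ne hne
  obtain ⟨w, huw, hw⟩ := exists_adj_dist_eq (Nat.sub_add_cancel hpos).symm
  exact ⟨w, huw, by omega⟩

end Distance

section Degree

variable {V : Type*} {G : SimpleGraph V} {x a b : V}

theorem exists_two_neighbors_ne [Fintype (G.neighborSet x)] (hdeg : 3 ≤ G.degree x) (a : V) :
    ∃ b c, b ≠ c ∧ (G.Adj x b ∧ b ≠ a) ∧ G.Adj x c ∧ c ≠ a := by
  classical
  have hcard : 1 < ((G.neighborFinset x).erase a).card := by
    have hle := pred_card_le_card_erase (s := G.neighborFinset x) (a := a)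
    rw [G.card_neighborFinset_eq_degree] at hle
    omega
  obtain ⟨b, hb, c, hc, hbc⟩ := one_lt_card.1 hcard
  simp only [mem_erase, mem_neighborFinset] at hb hc
  exact ⟨b, c, hbc, hb.symm, hc.symm⟩

theorem exists_third_neighbor [Fintype (G.neighborSet x)] (hdeg : G.degree x = 3) (ha : G.Adj x a)
    (hb : G.Adj x b) (hab : a ≠ b) :
    ∃ c, G.Adj x c ∧ c ≠ a ∧ c ≠ b ∧ ∀ z, G.Adj x z → z = a ∨ z = b ∨ z = c := by
  classical
  have hcard : (((G.neighborFinset x).erase a).erase b).card = 1 := by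
    rw [card_erase_of_mem (by simp [hb, hab.symm]), card_erase_of_mem (by simpa using ha),
      G.card_neighborFinset_eq_degree, hdeg]
  obtain ⟨c, hc⟩ := card_eq_one.1 hcard
  have hmem (z : V) : (z ≠ b ∧ z ≠ a ∧ G.Adj x z) ↔ z = c := by
    simpa only [mem_erase, mem_neighborFinset, mem_singleton] using Finset.ext_iff.1 hc z
  obtain ⟨hcb, hca, hxc⟩ := (hmem c).2 rfl
  exact ⟨c, hxc, hca, hcb, fun z hxz => by grind⟩

theorem even_card_of_isRegularOfDegree_odd [Fintype V] [DecidableRel G.Adj] {k : ℕ} (hk : Odd k)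
    (hreg : G.IsRegularOfDegree k) : Even (Fintype.card V) := by
  have h := G.even_card_odd_degree_vertices
  simpa only [hreg.degree_eq, hk, filter_true, card_univ] using h

end Degree

section Closer

variable {V : Type*} [Fintype V] {G : SimpleGraph V} {u v x : V}

theorem mem_ndbW : x ∈ ndbW G u v ↔ G.dist x u < G.dist x v := by
  simp [ndbW]

theorem mem_ndbD {i j : ℕ} : x ∈ ndbD G u v i j ↔ G.dist x u = i ∧ G.dist x v = j := by
  simp [ndbD]

theorem IsNDB.card_ndbW {γ : ℕ} (hndb : IsNDB G γ) (h : G.Adj u v) : (ndbW G u v).card = γ :=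
  (hndb u v h).1

theorem sum_card_ndbD_le_card_ndbW (G : SimpleGraph V) (u v : V) (n : ℕ) :
    ∑ i ∈ range n, (ndbD G u v i (i + 1)).card ≤ (ndbW G u v).card := by
  classical
  rw [← card_biUnion]
  · refine card_le_card (biUnion_subset.2 fun i _ x hx => ?_)
    rw [mem_ndbD] at hx
    exact mem_ndbW.2 (by omega)
  · intro i _ j _ hij
    refine disjoint_left.2 fun x hi hj => hij ?_
    rw [mem_ndbD] at hi hj
    omega

theorem ndbW_subset_singleton_of_neighbors (hconn : G.Connected)
    (h : ∀ w, G.Adj u w → w = v ∨ G.Adj v w) : ndbW G u v ⊆ {u} := by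
  intro z hz
  rw [mem_singleton]
  by_contra hzu
  rw [mem_ndbW, G.dist_comm (u := z), G.dist_comm (u := z)] at hz
  obtain ⟨w, huw, hw⟩ := exists_adj_dist_add_one_eq hconn (Ne.symm hzu)
  rcases h w huw with rfl | hvw
  · omega
  · have := dist_le_dist_add_one_left hvw z
    omega

end Closer

section Triangle

variable {V : Type*} [Fintype V] {G : SimpleGraph V} {γ : ℕ} {a b c u x y z : V}

/-- The vertices at the same distance from all three of `a`, `b` and `c`. -/
noncomputable def equidistant (G : SimpleGraph V) (a b c : V) : Finset V :=
  Finset.univ.filter fun z => G.dist z a = G.dist z b ∧ G.dist z a = G.dist z c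

/-- The cell of `a` in the closed Voronoi partition with centres `a`, `b` and `c`: the vertices for
which neither `b` nor `c` is strictly closer than `a`. -/
noncomputable def voronoiCell (G : SimpleGraph V) (a b c : V) : Finset V :=
  Finset.univ.filter fun z => G.dist z a ≤ G.dist z b ∧ G.dist z a ≤ G.dist z c

theorem mem_equidistant :
    z ∈ equidistant G a b c ↔ G.dist z a = G.dist z b ∧ G.dist z a = G.dist z c := by
  simp [equidistant]

theorem mem_voronoiCell :
    z ∈ voronoiCell G a b c ↔ G.dist z a ≤ G.dist z b ∧ G.dist z a ≤ G.dist z c := by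
  simp [voronoiCell]

-- Distances to `a`, `b`, `c` differ by at most one, so `d(z,a) < d(z,b) < d(z,c)` never happens.
theorem card_eq_sum_card_ndbW_add_card_equidistant (hab : G.Adj a b) (hbc : G.Adj b c)
    (hac : G.Adj a c) :
    Fintype.card V = (ndbW G a b).card + (ndbW G b c).card + (ndbW G c a).card +
      (equidistant G a b c).card := by
  classical
  have hle (z : V) : G.dist z a ≤ G.dist z b + 1 ∧ G.dist z b ≤ G.dist z c + 1 ∧
      G.dist z c ≤ G.dist z a + 1 :=
    ⟨dist_le_dist_add_one_right hab z, dist_le_dist_add_one_right hbc z,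
      dist_le_dist_add_one_right hac.symm z⟩
  have hcover : (univ : Finset V) =
      ndbW G a b ∪ ndbW G b c ∪ ndbW G c a ∪ equidistant G a b c := by
    ext z
    have := hle z
    simp only [mem_univ, mem_union, mem_ndbW, mem_equidistant, true_iff]
    omega
  rw [← card_univ, hcover, card_union_of_disjoint, card_union_of_disjoint, card_union_of_disjoint]
  all_goals
    refine disjoint_left.2 fun z hz hz' => ?_
    have := hle z
    simp only [mem_union, mem_ndbW, mem_equidistant] at hz hz'
    omega

theorem disjoint_ndbW_equidistant : Disjoint (ndbW G a b) (equidistant G a b c) := by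
  refine disjoint_left.2 fun z hz hz' => ?_
  rw [mem_ndbW] at hz
  rw [mem_equidistant] at hz'
  omega

theorem ndbW_union_equidistant_subset_voronoiCell [DecidableEq V] (hbc : G.Adj b c) :
    ndbW G a b ∪ equidistant G a b c ⊆ voronoiCell G a b c := by
  intro z hz
  have := dist_le_dist_add_one_right hbc z
  rw [mem_union, mem_ndbW, mem_equidistant] at hz
  rw [mem_voronoiCell]
  omega

theorem voronoiCell_erase_subset_ndbW [DecidableEq V] (hconn : G.Connected)
    (hN : ∀ z, G.Adj a z → z = b ∨ z = c ∨ z = u) :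
    (voronoiCell G a b c).erase a ⊆ ndbW G u a := by
  intro z hz
  rw [mem_erase, mem_voronoiCell] at hz
  obtain ⟨hza, hzb, hzc⟩ := hz
  simp only [G.dist_comm (u := z)] at hzb hzc
  obtain ⟨w, haw, hw⟩ := exists_adj_dist_add_one_eq hconn (Ne.symm hza)
  rcases hN w haw with rfl | rfl | rfl
  · omega
  · omega
  · rw [mem_ndbW, G.dist_comm (u := z), G.dist_comm (u := z)]
    omega

/-- A triangle in a connected cubic graph that is nicely distance-balanced with an odd constant.
For the constant `5` no such configuration exists, see `cliqueFree_three_of_isNDB_five`. -/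
structure IsCubicNDBTriangle (G : SimpleGraph V) [DecidableRel G.Adj] (γ : ℕ) (a b c : V) :
    Prop where
  connected : G.Connected
  regular : G.IsRegularOfDegree 3
  ndb : IsNDB G γ
  odd : Odd γ
  adj_ab : G.Adj a b
  adj_bc : G.Adj b c
  adj_ac : G.Adj a c

namespace IsCubicNDBTriangle

variable [DecidableRel G.Adj]

theorem swap (h : IsCubicNDBTriangle G γ a b c) : IsCubicNDBTriangle G γ a c b :=
  ⟨h.connected, h.regular, h.ndb, h.odd, h.adj_ac, h.adj_bc.symm, h.adj_ab⟩

theorem rotate (h : IsCubicNDBTriangle G γ a b c) : IsCubicNDBTriangle G γ b c a :=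
  ⟨h.connected, h.regular, h.ndb, h.odd, h.adj_bc, h.adj_ac.symm, h.adj_ab.symm⟩

theorem exists_outer_neighbor (h : IsCubicNDBTriangle G γ a b c) :
    ∃ u, G.Adj a u ∧ ∀ z, G.Adj a z → z = b ∨ z = c ∨ z = u := by
  obtain ⟨u, hau, -, -, hN⟩ := exists_third_neighbor (h.regular a) h.adj_ab h.adj_ac h.adj_bc.ne
  exact ⟨u, hau, hN⟩

theorem card_voronoiCell_le (h : IsCubicNDBTriangle G γ a b c) :
    (voronoiCell G a b c).card ≤ γ + 1 := by
  classical
  obtain ⟨u, hau, hN⟩ := h.exists_outer_neighbor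
  have hle := card_le_card (voronoiCell_erase_subset_ndbW h.connected hN)
  rw [h.ndb.card_ndbW hau.symm] at hle
  have := pred_card_le_card_erase (s := voronoiCell G a b c) (a := a)
  omega

theorem card_ndbW_union_equidistant [DecidableEq V] (h : IsCubicNDBTriangle G γ a b c) :
    (ndbW G a b ∪ equidistant G a b c).card = γ + (equidistant G a b c).card := by
  rw [card_union_of_disjoint disjoint_ndbW_equidistant, h.ndb.card_ndbW h.adj_ab]

-- The order `3γ + |equidistant|` of a cubic graph is even and `γ` is odd, so the equidistant set
-- is nonempty; the bound on the Voronoi cell leaves room for one element only.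
theorem card_equidistant (h : IsCubicNDBTriangle G γ a b c) :
    (equidistant G a b c).card = 1 := by
  classical
  have hle := (card_le_card (ndbW_union_equidistant_subset_voronoiCell h.adj_bc)).trans
    h.card_voronoiCell_le
  rw [h.card_ndbW_union_equidistant] at hle
  have heven := even_card_of_isRegularOfDegree_odd (by decide) h.regular
  rw [card_eq_sum_card_ndbW_add_card_equidistant h.adj_ab h.adj_bc h.adj_ac,
    h.ndb.card_ndbW h.adj_ab, h.ndb.card_ndbW h.adj_bc, h.ndb.card_ndbW h.adj_ac.symm] at heven
  have hodd := h.odd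
  grind

theorem voronoiCell_eq [DecidableEq V] (h : IsCubicNDBTriangle G γ a b c) :
    voronoiCell G a b c = ndbW G a b ∪ equidistant G a b c := by
  refine (eq_of_subset_of_card_le (ndbW_union_equidistant_subset_voronoiCell h.adj_bc) ?_).symm
  rw [h.card_ndbW_union_equidistant, h.card_equidistant]
  exact h.card_voronoiCell_le

theorem ndbW_eq_voronoiCell_erase [DecidableEq V] (h : IsCubicNDBTriangle G γ a b c)
    (hau : G.Adj a u) (hN : ∀ z, G.Adj a z → z = b ∨ z = c ∨ z = u) :
    ndbW G u a = (voronoiCell G a b c).erase a := by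
  refine (eq_of_subset_of_card_le (voronoiCell_erase_subset_ndbW h.connected hN) ?_).symm
  rw [h.ndb.card_ndbW hau.symm, card_erase_of_mem (by simp [mem_voronoiCell]), h.voronoiCell_eq,
    h.card_ndbW_union_equidistant, h.card_equidistant, Nat.add_sub_cancel]

theorem ndbW_eq_ndbW (h : IsCubicNDBTriangle G γ a b c) : ndbW G a b = ndbW G a c := by
  classical
  ext z
  have hb := Finset.ext_iff.1 h.voronoiCell_eq z
  have hc := Finset.ext_iff.1 h.swap.voronoiCell_eq z
  simp only [mem_union, mem_ndbW, mem_equidistant, mem_voronoiCell] at hb hc ⊢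
  omega

theorem not_adj_of_mem_ndbW (h : IsCubicNDBTriangle G γ a b c) (hx : x ∈ ndbW G a b)
    (hxa : x ≠ a) (hy : y ∈ ndbW G b a) : ¬ G.Adj x y := by
  classical
  intro hxy
  obtain ⟨u, hau, hN⟩ := h.exists_outer_neighbor
  have hW := h.ndbW_eq_voronoiCell_erase hau hN
  have hxu : x ∈ ndbW G u a := by
    rw [hW, mem_erase, h.voronoiCell_eq]
    exact ⟨hxa, mem_union_left _ hx⟩
  have hyu : y ∉ ndbW G u a := by
    rw [hW, mem_erase, mem_voronoiCell]
    rw [mem_ndbW] at hy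
    omega
  rw [mem_ndbW] at hx hy hxu hyu
  have hu := dist_le_dist_add_one_left hxy.symm u
  have hb := dist_le_dist_add_one_left hxy b
  omega

theorem mem_ndbW_or_mem_equidistant (h : IsCubicNDBTriangle G γ a b c) (z : V) :
    z ∈ ndbW G a b ∨ z ∈ ndbW G b a ∨ z ∈ ndbW G c a ∨ z ∈ equidistant G a b c := by
  classical
  have ha := Finset.ext_iff.1 h.voronoiCell_eq z
  have hb := Finset.ext_iff.1 h.rotate.voronoiCell_eq z
  simp only [mem_union, mem_ndbW, mem_equidistant, mem_voronoiCell] at ha hb ⊢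
  omega

theorem mem_ndbW_or_mem_equidistant_of_adj (h : IsCubicNDBTriangle G γ a b c)
    (hx : x ∈ ndbW G a b) (hxa : x ≠ a) (hxy : G.Adj x y) :
    y ∈ ndbW G a b ∨ y ∈ equidistant G a b c := by
  rcases h.mem_ndbW_or_mem_equidistant y with hy | hy | hy | hy
  · exact Or.inl hy
  · exact absurd hxy (h.not_adj_of_mem_ndbW hx hxa hy)
  · exact absurd hxy (h.swap.not_adj_of_mem_ndbW (h.ndbW_eq_ndbW ▸ hx) hxa hy)
  · exact Or.inr hy

theorem exists_adj_mem_ndbW (h : IsCubicNDBTriangle G γ a b c) (hz : z ∈ equidistant G a b c) :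
    ∃ y ∈ ndbW G a b, G.Adj z y := by
  classical
  have hzE := mem_equidistant.1 hz
  have hza : z ≠ a := by
    rintro rfl
    have := h.connected.pos_dist_of_ne h.adj_ab.ne
    simp only [SimpleGraph.dist_self] at hzE
    omega
  obtain ⟨y, hzy, hy⟩ := exists_adj_dist_add_one_eq h.connected hza
  have hyE : y ∉ equidistant G a b c := fun hy' => hzy.ne <|
    card_le_one.1 h.card_equidistant.le z hz y hy'
  have hyV : y ∈ voronoiCell G a b c := by
    have hb := dist_le_dist_add_one_left hzy b
    have hc := dist_le_dist_add_one_left hzy c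
    rw [mem_voronoiCell]
    omega
  rw [h.voronoiCell_eq, mem_union] at hyV
  exact ⟨y, hyV.resolve_right hyE, hzy⟩

-- The vertex `z` has a neighbour in each of `W_{a,b}`, `W_{b,c}`, `W_{c,a}`, hence only one.
theorem existsUnique_adj_mem_ndbW (h : IsCubicNDBTriangle G γ a b c)
    (hz : z ∈ equidistant G a b c) : ∃! y, y ∈ ndbW G a b ∧ G.Adj z y := by
  have hz' : z ∈ equidistant G b c a := by
    rw [mem_equidistant] at hz ⊢
    omega
  have hz'' : z ∈ equidistant G c a b := by
    rw [mem_equidistant] at hz ⊢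
    omega
  obtain ⟨y, hy, hzy⟩ := h.exists_adj_mem_ndbW hz
  obtain ⟨p, hp, hzp⟩ := h.rotate.exists_adj_mem_ndbW hz'
  obtain ⟨q, hq, hzq⟩ := h.rotate.rotate.exists_adj_mem_ndbW hz''
  have hy' := h.ndbW_eq_ndbW ▸ hy
  have hp' := h.rotate.ndbW_eq_ndbW ▸ hp
  have hq' := h.rotate.rotate.ndbW_eq_ndbW ▸ hq
  rw [mem_ndbW] at hy hp hq hy' hp' hq'
  have hyp : y ≠ p := by rintro rfl; omega
  obtain ⟨r, -, -, -, hN⟩ := exists_third_neighbor (h.regular z) hzy hzp hyp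
  have hqr : q = r := by
    rcases hN q hzq with rfl | rfl | rfl
    · omega
    · omega
    · rfl
  refine ⟨y, ⟨mem_ndbW.2 hy, hzy⟩, fun w ⟨hw, hzw⟩ => ?_⟩
  have hwc := mem_ndbW.1 (h.ndbW_eq_ndbW ▸ hw)
  rw [mem_ndbW] at hw
  rcases hN w hzw with rfl | rfl | rfl
  · rfl
  · omega
  · rw [← hqr] at hw hwc
    omega

-- An edge leaving `(ndbW G a b).erase a` ends at `a` or at the equidistant vertex, and each of
-- these two has only one neighbour in that set.
theorem exists_forall_adj_mem_erase [DecidableEq V] (h : IsCubicNDBTriangle G γ a b c) :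
    ∃ u v, ∀ m ∈ (ndbW G a b).erase a, m ≠ u → m ≠ v →
      ∀ y, G.Adj m y → y ∈ (ndbW G a b).erase a := by
  obtain ⟨z, hz⟩ := card_eq_one.1 h.card_equidistant
  obtain ⟨u, -, hN⟩ := h.exists_outer_neighbor
  obtain ⟨v, -, hv⟩ := h.existsUnique_adj_mem_ndbW (z := z) (by simp [hz])
  refine ⟨u, v, fun m hm hmu hmv y hmy => ?_⟩
  obtain ⟨hma, hm⟩ := mem_erase.1 hm
  rw [mem_erase]
  constructor
  · rintro rfl
    have hmc := h.ndbW_eq_ndbW ▸ hm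
    rw [mem_ndbW] at hm hmc
    rcases hN m hmy.symm with rfl | rfl | rfl
    · simp at hm
    · simp at hmc
    · exact hmu rfl
  · refine (h.mem_ndbW_or_mem_equidistant_of_adj hm hma hmy).resolve_right fun hy => hmv ?_
    rw [hz, mem_singleton] at hy
    exact hv m ⟨hm, hy ▸ hmy.symm⟩

end IsCubicNDBTriangle

-- Two of the four vertices in `(ndbW G a b).erase a` have all their neighbours inside it, so they
-- are adjacent to everything in it and no vertex but themselves tells them apart.
theorem not_isCubicNDBTriangle_five [DecidableRel G.Adj] : ¬ IsCubicNDBTriangle G 5 a b c := by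
  classical
  intro h
  obtain ⟨u, v, hclosed⟩ := h.exists_forall_adj_mem_erase
  set A := (ndbW G a b).erase a
  have hA : A.card = 4 := by
    rw [card_erase_of_mem (by
      simpa [mem_ndbW] using h.connected.pos_dist_of_ne h.adj_ab.ne), h.ndb.card_ndbW h.adj_ab]
  have hnbr {m : V} (hm : m ∈ A) (hmu : m ≠ u) (hmv : m ≠ v) :
      G.neighborFinset m = A.erase m := by
    refine eq_of_subset_of_card_le (fun y hy => ?_) ?_
    · rw [mem_neighborFinset] at hy
      exact mem_erase.2 ⟨hy.ne', hclosed m hm hmu hmv y hy⟩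
    · rw [card_erase_of_mem hm, hA, G.card_neighborFinset_eq_degree, h.regular m]
  obtain ⟨m, hm, n, hn, hmn⟩ : ∃ m ∈ (A.erase u).erase v, ∃ n ∈ (A.erase u).erase v, m ≠ n := by
    have hu := pred_card_le_card_erase (s := A) (a := u)
    have hv := pred_card_le_card_erase (s := A.erase u) (a := v)
    exact one_lt_card.1 (by omega)
  simp only [mem_erase] at hm hn
  have hNm := hnbr hm.2.2 hm.2.1 hm.1
  have hNn := hnbr hn.2.2 hn.2.1 hn.1
  have hadj : G.Adj m n := by
    rw [← mem_neighborFinset, hNm]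
    exact mem_erase.2 ⟨hmn.symm, hn.2.2⟩
  have hle := card_le_card <| ndbW_subset_singleton_of_neighbors (u := m) (v := n) h.connected
    fun w hw => or_iff_not_imp_left.2 fun hwn => by
      rw [← mem_neighborFinset, hNm, mem_erase] at hw
      rw [← mem_neighborFinset, hNn]
      exact mem_erase.2 ⟨hwn, hw.2⟩
  rw [h.ndb.card_ndbW hadj, card_singleton] at hle
  omega

theorem cliqueFree_three_of_isNDB_five [DecidableRel G.Adj] (hconn : G.Connected)
    (hreg : G.IsRegularOfDegree 3) (hndb : IsNDB G 5) : G.CliqueFree 3 := by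
  classical
  intro s hs
  obtain ⟨a, b, c, hab, hac, hbc, -⟩ := is3Clique_iff.1 hs
  exact not_isCubicNDBTriangle_five ⟨hconn, hreg, hndb, by decide, hab, hbc, hac⟩

end Triangle

section Foot

variable {V : Type*} {G : SimpleGraph V} {a b c u x y : V}

/-- The vertex `u` is at distance two from `x`, and `a` is a common neighbour of `x` and `u`. Taken
with respect to two vertices `x` and `y` at distance four, this says on which edges a geodesic from
`x` to `y` can enter and leave its midpoint `u`. -/
structure IsFoot (G : SimpleGraph V) (x a u : V) : Prop where
  dist_eq_two : G.dist u x = 2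
  adj_base : G.Adj x a
  adj : G.Adj a u

theorem exists_isFoot (hux : G.dist u x = 2) : ∃ a, IsFoot G x a u := by
  obtain ⟨a, hua, hax⟩ := exists_adj_dist_eq hux
  exact ⟨a, hux, (dist_eq_one_iff_adj.1 hax).symm, hua.symm⟩

theorem not_adj_of_adj_of_adj (hfree : G.CliqueFree 3) (hab : G.Adj a b) (hbc : G.Adj b c) :
    ¬ G.Adj a c := by
  classical
  exact fun hac => hfree {a, b, c} (is3Clique_triple_iff.2 ⟨hab, hac, hbc⟩)

theorem dist_eq_two_of_adj_of_adj (hfree : G.CliqueFree 3) (hab : G.Adj a b) (hbc : G.Adj b c)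
    (hac : a ≠ c) : G.dist a c = 2 := by
  have hle := dist_le_dist_add_one_left hab c
  have hpos := (hab.reachable.trans hbc.reachable).pos_dist_of_ne hac
  have hne : G.dist a c ≠ 1 := fun h =>
    not_adj_of_adj_of_adj hfree hab hbc (dist_eq_one_iff_adj.1 h)
  rw [dist_eq_one_iff_adj.2 hbc] at hle
  omega

theorem isFoot_of_adj_of_adj (hfree : G.CliqueFree 3) (hxa : G.Adj x a) (hau : G.Adj a u)
    (hux : u ≠ x) : IsFoot G x a u :=
  ⟨dist_eq_two_of_adj_of_adj hfree hau.symm hxa.symm hux, hxa, hau⟩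

theorem IsFoot.dist_base (ha : IsFoot G x a u) : G.dist a x = 1 :=
  dist_eq_one_iff_adj.2 ha.adj_base.symm

theorem IsFoot.dist_eq_three (ha : IsFoot G x a u) (hxy : G.dist x y = 4) (huy : G.dist u y = 2) :
    G.dist a y = 3 := by
  have hge := dist_le_dist_add_one_left ha.adj_base y
  have hle := dist_le_dist_add_one_left ha.adj y
  omega

end Foot

section TriangleFree

variable {V : Type*} [Fintype V] {G : SimpleGraph V}
  {a a' b c e g p p' q q' s s' u u' w w' x y y' z : V}

/-- A connected triangle-free cubic graph of diameter at most `4` that is nicely distance-balanced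
with constant `5`. Its diameter is then at most `3`, see `IsTriangleFreeCubicNDB.dist_ne_four`. -/
structure IsTriangleFreeCubicNDB (G : SimpleGraph V) [DecidableRel G.Adj] : Prop where
  connected : G.Connected
  regular : G.IsRegularOfDegree 3
  ndb : IsNDB G 5
  cliqueFree : G.CliqueFree 3
  dist_le_four : ∀ u v, G.dist u v ≤ 4

namespace IsTriangleFreeCubicNDB

variable [DecidableRel G.Adj]

theorem two_le_card_ndbD_one_two (h : IsTriangleFreeCubicNDB G) (hax : G.Adj a x) :
    2 ≤ (ndbD G a x 1 2).card := by
  classical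
  obtain ⟨b, c, hbc, ⟨hab, hbx⟩, hac, hcx⟩ := exists_two_neighbors_ne (h.regular a).ge x
  refine (card_pair hbc).symm.le.trans (card_le_card fun z hz => mem_ndbD.2 ?_)
  rw [mem_insert, mem_singleton] at hz
  have hdist {z : V} (haz : G.Adj a z) (hzx : z ≠ x) : G.dist z a = 1 ∧ G.dist z x = 2 :=
    ⟨dist_eq_one_iff_adj.2 haz.symm, dist_eq_two_of_adj_of_adj h.cliqueFree haz.symm hax hzx⟩
  rcases hz with rfl | rfl
  · exact hdist hab hbx
  · exact hdist hac hcx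

-- Of the five vertices of `ndbW G a x`, three are at distance at most one from `a`.
theorem card_ndbD_le_one (h : IsTriangleFreeCubicNDB G) (hax : G.Adj a x)
    (hqa : G.dist q a = 3) (hqx : G.dist q x = 4) :
    (ndbD G a x 2 3).card ≤ 1 ∧ (ndbD G a x 3 4).card ≤ 1 := by
  have hsum := sum_card_ndbD_le_card_ndbW G a x 4
  simp only [sum_range_succ, sum_range_zero, zero_add, Nat.reduceAdd, h.ndb.card_ndbW hax] at hsum
  have h₀ : 0 < (ndbD G a x 0 1).card :=
    card_pos.2 ⟨a, mem_ndbD.2 ⟨G.dist_self, dist_eq_one_iff_adj.2 hax⟩⟩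
  have h₁ := h.two_le_card_ndbD_one_two hax
  have h₂ : 0 < (ndbD G a x 2 3).card := by
    obtain ⟨p, hqp, hpa⟩ := exists_adj_dist_eq hqa
    have hpx := dist_le_dist_add_one_right hax.symm p
    have hqx' := dist_le_dist_add_one_left hqp x
    exact card_pos.2 ⟨p, mem_ndbD.2 ⟨hpa, by omega⟩⟩
  have h₃ : 0 < (ndbD G a x 3 4).card := card_pos.2 ⟨q, mem_ndbD.2 ⟨hqa, hqx⟩⟩
  omega

theorem eq_of_dist_eq_two_of_dist_eq_three (h : IsTriangleFreeCubicNDB G) (hax : G.Adj a x)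
    (hqa : G.dist q a = 3) (hqx : G.dist q x = 4) (hpa : G.dist p a = 2) (hpx : G.dist p x = 3)
    (hpa' : G.dist p' a = 2) (hpx' : G.dist p' x = 3) : p = p' :=
  card_le_one.1 (h.card_ndbD_le_one hax hqa hqx).1 p (mem_ndbD.2 ⟨hpa, hpx⟩)
    p' (mem_ndbD.2 ⟨hpa', hpx'⟩)

theorem eq_of_dist_eq_three_of_dist_eq_four (h : IsTriangleFreeCubicNDB G) (hax : G.Adj a x)
    (hqa : G.dist q a = 3) (hqx : G.dist q x = 4) (hqa' : G.dist q' a = 3)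
    (hqx' : G.dist q' x = 4) : q = q' :=
  card_le_one.1 (h.card_ndbD_le_one hax hqa hqx).2 q (mem_ndbD.2 ⟨hqa, hqx⟩)
    q' (mem_ndbD.2 ⟨hqa', hqx'⟩)

theorem dist_le_two_of_adj_middle (h : IsTriangleFreeCubicNDB G) (hxy : G.dist x y = 4)
    (ha : IsFoot G x a u) (hb : IsFoot G y b u) (huw : G.Adj u w) (hwa : w ≠ a) (hwb : w ≠ b) :
    G.dist w x ≤ 2 := by
  have hyx : G.dist y x = 4 := G.dist_comm.trans hxy
  have hya : G.dist y a = 3 := G.dist_comm.trans (ha.dist_eq_three hxy hb.dist_eq_two)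
  have hbx : G.dist b x = 3 := hb.dist_eq_three hyx ha.dist_eq_two
  have hba : b ≠ a := by
    rintro rfl
    have := ha.dist_base
    omega
  have hwa₂ := dist_eq_two_of_adj_of_adj h.cliqueFree huw.symm ha.adj.symm hwa
  have hba₂ := dist_eq_two_of_adj_of_adj h.cliqueFree hb.adj ha.adj.symm hba
  have hle := dist_le_dist_add_one_left huw.symm x
  have hne : G.dist w x ≠ 3 := fun hwx => hwb <|
    h.eq_of_dist_eq_two_of_dist_eq_three ha.adj_base.symm hya hyx hwa₂ hwx hba₂ hbx
  have hux := ha.dist_eq_two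
  omega

theorem dist_eq_two_of_adj_middle (h : IsTriangleFreeCubicNDB G) (hxy : G.dist x y = 4)
    (ha : IsFoot G x a u) (hb : IsFoot G y b u) (huw : G.Adj u w) (hwa : w ≠ a) (hwb : w ≠ b) :
    G.dist w x = 2 ∧ G.dist w y = 2 := by
  have hwx := h.dist_le_two_of_adj_middle hxy ha hb huw hwa hwb
  have hwy := h.dist_le_two_of_adj_middle (G.dist_comm.trans hxy) hb ha huw hwb hwa
  have htri := h.connected.dist_triangle (u := x) (v := w) (w := y)
  rw [hxy, G.dist_comm] at htri
  omega

theorem exists_two_adj_dist_eq_three (h : IsTriangleFreeCubicNDB G) (hxy : G.dist x y = 4) :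
    ∃ a a', a ≠ a' ∧ (G.Adj x a ∧ G.dist a y = 3) ∧ G.Adj x a' ∧ G.dist a' y = 3 := by
  obtain ⟨a, hxa, hay⟩ := exists_adj_dist_eq hxy
  obtain ⟨u, hau, huy⟩ := exists_adj_dist_eq hay
  have hux : u ≠ x := by rintro rfl; omega
  have ha := isFoot_of_adj_of_adj h.cliqueFree hxa hau hux
  obtain ⟨b, hb⟩ := exists_isFoot huy
  have hab : a ≠ b := by
    rintro rfl
    have := hb.dist_base
    omega
  obtain ⟨w, huw, hwa, hwb, -⟩ := exists_third_neighbor (h.regular u) hau.symm hb.adj.symm hab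
  obtain ⟨hwx, hwy⟩ := h.dist_eq_two_of_adj_middle hxy ha hb huw hwa hwb
  obtain ⟨a', ha'⟩ := exists_isFoot hwx
  refine ⟨a, a', ?_, ⟨hxa, hay⟩, ha'.adj_base, ha'.dist_eq_three hxy hwy⟩
  rintro rfl
  exact not_adj_of_adj_of_adj h.cliqueFree hau huw ha'.adj

-- Two of the three neighbours of `x` lead towards `y` and two towards `y'`, so one leads to both.
theorem eq_of_dist_eq_four (h : IsTriangleFreeCubicNDB G) (hxy : G.dist x y = 4)
    (hxy' : G.dist x y' = 4) : y = y' := by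
  obtain ⟨a, a', haa', ⟨hxa, hay⟩, hxa', hay'⟩ := h.exists_two_adj_dist_eq_three hxy
  obtain ⟨b, b', hbb', ⟨hxb, hby⟩, hxb', hby'⟩ := h.exists_two_adj_dist_eq_three hxy'
  obtain ⟨c, -, -, -, hN⟩ := exists_third_neighbor (h.regular x) hxa hxa' haa'
  obtain ⟨m, hxm, hmy, hmy'⟩ : ∃ m, G.Adj x m ∧ G.dist m y = 3 ∧ G.dist m y' = 3 := by
    have hb := hN b hxb
    have hb' := hN b' hxb'
    grind
  rw [G.dist_comm] at hxy hxy' hmy hmy'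
  exact h.eq_of_dist_eq_three_of_dist_eq_four hxm.symm hmy hxy hmy' hxy'

theorem adj_of_dist_eq_three (h : IsTriangleFreeCubicNDB G) (hxy : G.dist x y = 4)
    (hzx : G.dist z x = 3) : G.Adj z y := by
  obtain ⟨a, hxa, haz⟩ := exists_adj_dist_eq (G.dist_comm.trans hzx)
  have hyx : G.dist y x = 4 := G.dist_comm.trans hxy
  have hya : G.dist y a = 3 := by
    have hle := h.dist_le_four y a
    have hge := dist_le_dist_add_one_right hxa y
    have hne : G.dist y a ≠ 4 := fun h4 => hxa.ne (h.eq_of_dist_eq_four hyx h4)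
    omega
  obtain ⟨p, hyp, hpa⟩ := exists_adj_dist_eq hya
  have hpx : G.dist p x = 3 := by
    have hge := dist_le_dist_add_one_left hyp x
    have hle := dist_le_dist_add_one_right hxa p
    omega
  rw [h.eq_of_dist_eq_two_of_dist_eq_three hxa.symm hya hyx (G.dist_comm.trans haz) hzx hpa hpx]
  exact hyp.symm

theorem dist_add_dist_eq_four (h : IsTriangleFreeCubicNDB G) (hxy : G.dist x y = 4) (z : V) :
    G.dist z x + G.dist z y = 4 := by
  have hyx : G.dist y x = 4 := G.dist_comm.trans hxy
  have htri := h.connected.dist_triangle (u := x) (v := z) (w := y)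
  rw [G.dist_comm (u := x) (v := z)] at htri
  have hzx := h.dist_le_four z x
  have hzy := h.dist_le_four z y
  have h₃ (hz : G.dist z x = 3) := dist_eq_one_iff_adj.2 (h.adj_of_dist_eq_three hxy hz)
  have h₃' (hz : G.dist z y = 3) := dist_eq_one_iff_adj.2 (h.adj_of_dist_eq_three hyx hz)
  have h₄ (hz : G.dist z x = 4) : G.dist z y = 0 := by
    rw [← h.eq_of_dist_eq_four hxy (G.dist_comm.trans hz), SimpleGraph.dist_self]
  have h₄' (hz : G.dist z y = 4) : G.dist z x = 0 := by
    rw [← h.eq_of_dist_eq_four hyx (G.dist_comm.trans hz), SimpleGraph.dist_self]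
  omega

theorem dist_eq_two_symm (h : IsTriangleFreeCubicNDB G) (hxy : G.dist x y = 4)
    (hux : G.dist u x = 2) : G.dist u y = 2 := by
  have := h.dist_add_dist_eq_four hxy u
  omega

theorem isFoot_unique (h : IsTriangleFreeCubicNDB G) (hxy : G.dist x y = 4) (hu : IsFoot G x a u)
    (hu' : IsFoot G x a' u) : a = a' := by
  by_contra haa'
  have huy := h.dist_eq_two_symm hxy hu.dist_eq_two
  obtain ⟨b, hb⟩ := exists_isFoot huy
  have ha'b : a' ≠ b := by
    rintro rfl
    have := hu'.dist_eq_three hxy huy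
    rw [hb.dist_base] at this
    omega
  have hmid := h.dist_eq_two_of_adj_middle hxy hu hb hu'.adj.symm (Ne.symm haa') ha'b
  rw [hu'.dist_base] at hmid
  omega

theorem foot_eq_of_common_head (h : IsTriangleFreeCubicNDB G) (hxy : G.dist x y = 4)
    (hu : IsFoot G x a u) (hs : IsFoot G x e s) (hup : IsFoot G y p u) (hsp : IsFoot G y p s) :
    a = e := by
  have hxp : G.dist x p = 3 :=
    G.dist_comm.trans (hup.dist_eq_three (G.dist_comm.trans hxy) hu.dist_eq_two)
  have hlevel {a u : V} (hu : IsFoot G x a u) (hup : IsFoot G y p u) :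
      G.dist a p = 2 ∧ G.dist a y = 3 := by
    have hay := hu.dist_eq_three hxy hup.dist_eq_two
    refine ⟨dist_eq_two_of_adj_of_adj h.cliqueFree hu.adj hup.adj.symm ?_, hay⟩
    rintro rfl
    rw [hup.dist_base] at hay
    omega
  exact h.eq_of_dist_eq_two_of_dist_eq_three hup.adj_base.symm hxp hxy
    (hlevel hu hup).1 (hlevel hu hup).2 (hlevel hs hsp).1 (hlevel hs hsp).2

theorem exists_mate (h : IsTriangleFreeCubicNDB G) (hxy : G.dist x y = 4) (hux : G.dist u x = 2) :
    ∃ w, G.Adj u w ∧ ∀ z, G.Adj u z → (G.dist z x = 2 ↔ z = w) := by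
  obtain ⟨a, ha⟩ := exists_isFoot hux
  obtain ⟨b, hb⟩ := exists_isFoot (h.dist_eq_two_symm hxy hux)
  have hax := ha.dist_base
  have hbx := hb.dist_eq_three (G.dist_comm.trans hxy) hux
  have hab : a ≠ b := by rintro rfl; omega
  obtain ⟨w, huw, hwa, hwb, hN⟩ := exists_third_neighbor (h.regular u) ha.adj.symm hb.adj.symm hab
  have hwx := (h.dist_eq_two_of_adj_middle hxy ha hb huw hwa hwb).1
  refine ⟨w, huw, fun z huz => ⟨fun hzx => ?_, fun hzw => hzw ▸ hwx⟩⟩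
  rcases hN z huz with rfl | rfl | rfl
  · omega
  · omega
  · rfl

theorem mate_unique (h : IsTriangleFreeCubicNDB G) (hxy : G.dist x y = 4) (hux : G.dist u x = 2)
    (huw : G.Adj u w) (hwx : G.dist w x = 2) (huw' : G.Adj u w') (hwx' : G.dist w' x = 2) :
    w = w' := by
  obtain ⟨m, -, hm⟩ := h.exists_mate hxy hux
  exact ((hm w huw).1 hwx).trans ((hm w' huw').1 hwx').symm

theorem three_le_dist (h : IsTriangleFreeCubicNDB G) (hxy : G.dist x y = 4) (hu : IsFoot G x a u)
    (hs : IsFoot G x e s) (hae : a ≠ e) (hus : ¬ G.Adj u s) : 3 ≤ G.dist u s := by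
  have hne : u ≠ s := by
    rintro rfl
    exact hae (h.isFoot_unique hxy hu hs)
  have hpos := h.connected.pos_dist_of_ne hne
  have h₁ : G.dist u s ≠ 1 := fun h1 => hus (dist_eq_one_iff_adj.1 h1)
  have h₂ : G.dist u s ≠ 2 := by
    intro h2
    obtain ⟨m, -, hsm, hmu⟩ := exists_isFoot h2
    have hux := hu.dist_eq_two
    have hmx := dist_le_dist_add_one_left hmu x
    have hxm := dist_le_dist_add_one_left hmu.symm x
    obtain hm | hm | hm : G.dist m x = 1 ∨ G.dist m x = 2 ∨ G.dist m x = 3 := by omega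
    · have hxm := (dist_eq_one_iff_adj.1 hm).symm
      exact hae <| (h.isFoot_unique hxy hu ⟨hux, hxm, hmu⟩).trans
        (h.isFoot_unique hxy hs ⟨hs.dist_eq_two, hxm, hsm.symm⟩).symm
    · exact hne (h.mate_unique hxy hm hmu hux hsm.symm hs.dist_eq_two)
    · have hym := (h.adj_of_dist_eq_three hxy hm).symm
      exact hae <| h.foot_eq_of_common_head hxy hu hs
        ⟨h.dist_eq_two_symm hxy hux, hym, hmu⟩
        ⟨h.dist_eq_two_symm hxy hs.dist_eq_two, hym, hsm.symm⟩
  omega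

theorem not_adj_of_mate (h : IsTriangleFreeCubicNDB G) (hxy : G.dist x y = 4)
    (hu : G.dist u x = 2) (huw : G.Adj u w) (hw : IsFoot G x c w) (hs : IsFoot G x e s)
    (hce : c ≠ e) : ¬ G.Adj u s := by
  intro hus
  obtain rfl := h.mate_unique hxy hu huw hw.dist_eq_two hus hs.dist_eq_two
  exact hce (h.isFoot_unique hxy hw hs)

theorem three_le_dist_mate (h : IsTriangleFreeCubicNDB G) (hxy : G.dist x y = 4)
    (hu : IsFoot G x a u) (hs : IsFoot G x e s) (hae : a ≠ e) (huw : G.Adj u w)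
    (hw : IsFoot G x c w) (hce : c ≠ e) : 3 ≤ G.dist w s :=
  h.three_le_dist hxy hw hs hce (h.not_adj_of_mate hxy hw.dist_eq_two huw.symm hu hs hae)

-- The inner vertices of a path of length three from `u` to `s` would both be adjacent to `x`, or
-- both to `y`.
theorem four_le_dist (h : IsTriangleFreeCubicNDB G) (hxy : G.dist x y = 4) (hu : IsFoot G x a u)
    (hs : IsFoot G x e s) (hae : a ≠ e) (huw : G.Adj u w) (hsg : G.Adj s g) (hw : IsFoot G x c w)
    (hg : IsFoot G x c g) (hca : c ≠ a) (hce : c ≠ e) : 4 ≤ G.dist u s := by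
  have hge := h.three_le_dist hxy hu hs hae (h.not_adj_of_mate hxy hu.dist_eq_two huw hw hs hce)
  by_contra! hlt
  obtain ⟨k, huk, hks⟩ := exists_adj_dist_eq (show G.dist u s = 2 + 1 by omega)
  obtain ⟨m, -, hsm, hmk⟩ := exists_isFoot hks
  have hkx : G.dist k x ≠ 2 := fun hk => by
    obtain rfl := h.mate_unique hxy hu.dist_eq_two huw hw.dist_eq_two huk hk
    have := h.three_le_dist_mate hxy hu hs hae huw hw hce
    omega
  have hmx : G.dist m x ≠ 2 := fun hm => by
    obtain rfl := h.mate_unique hxy hs.dist_eq_two hsg hg.dist_eq_two hsm hm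
    have hgu := h.three_le_dist_mate hxy hs hu hae.symm hsg hg hca
    have hgk := dist_le_dist_add_one_left hmk u
    rw [dist_eq_one_iff_adj.2 huk.symm] at hgk
    omega
  have hux := hu.dist_eq_two
  have hsx := hs.dist_eq_two
  have hle {v v' : V} (hvv' : G.Adj v v') := dist_le_dist_add_one_left hvv' x
  have huk₁ := hle huk
  have huk₂ := hle huk.symm
  have hsm₁ := hle hsm
  have hsm₂ := hle hsm.symm
  have hmk₁ := hle hmk
  have hmk₂ := hle hmk.symm
  obtain ⟨hk, hm⟩ | ⟨hk, hm⟩ : G.dist k x = 1 ∧ G.dist m x = 1 ∨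
      G.dist k x = 3 ∧ G.dist m x = 3 := by omega
  · exact not_adj_of_adj_of_adj h.cliqueFree hmk (dist_eq_one_iff_adj.1 hk)
      (dist_eq_one_iff_adj.1 hm)
  · exact not_adj_of_adj_of_adj h.cliqueFree hmk (h.adj_of_dist_eq_three hxy hk)
      (h.adj_of_dist_eq_three hxy hm)

theorem dist_lt_dist_of_isFoot (h : IsTriangleFreeCubicNDB G) (hxy : G.dist x y = 4)
    (hN : ∀ z, G.Adj x z → z = a ∨ z = c ∨ z = e) (hu : IsFoot G x a u) (huw : G.Adj u w)
    (hw : IsFoot G x c w) (hca : c ≠ a) (hea : e ≠ a) (hec : e ≠ c) (hs : IsFoot G x e s) :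
    G.dist s a < G.dist s u := by
  obtain ⟨g, hsg, hg⟩ := h.exists_mate hxy hs.dist_eq_two
  obtain ⟨f, hf⟩ := exists_isFoot ((hg g hsg).2 rfl)
  rcases hN f hf.adj_base with rfl | rfl | rfl
  · have hsa := dist_le_dist_add_one_left hsg f
    rw [dist_eq_one_iff_adj.2 hf.adj.symm] at hsa
    have := h.three_le_dist hxy hu hs hea.symm
      (h.not_adj_of_mate hxy hu.dist_eq_two huw hw hs hec.symm)
    rw [G.dist_comm (v := u)]
    omega
  · have hsa := dist_le_dist_add_one_left hs.adj.symm a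
    have hea' := dist_eq_two_of_adj_of_adj h.cliqueFree hs.adj_base.symm hu.adj_base hea
    have := h.four_le_dist hxy hu hs hea.symm huw hsg hw hf hca hec.symm
    rw [G.dist_comm (v := u)]
    omega
  · exact absurd hf.adj (not_adj_of_adj_of_adj h.cliqueFree hs.adj hsg)

theorem dist_foot_lt_dist (h : IsTriangleFreeCubicNDB G) (hxy : G.dist x y = 4)
    (hu : IsFoot G x a u) (huw : G.Adj u w) (hw : IsFoot G x c w) (hxe : G.Adj x e)
    (hea : e ≠ a) (hec : e ≠ c) : G.dist e a < G.dist e u := by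
  rw [dist_eq_two_of_adj_of_adj h.cliqueFree hxe.symm hu.adj_base hea]
  have hux := hu.dist_eq_two
  have hex := dist_eq_one_iff_adj.2 hxe.symm
  have hpos : 0 < G.dist e u := h.connected.pos_dist_of_ne (by rintro rfl; omega)
  have h₁ : G.dist e u ≠ 1 := fun h1 =>
    hea (h.isFoot_unique hxy ⟨hux, hxe, dist_eq_one_iff_adj.1 h1⟩ hu)
  have h₂ : G.dist e u ≠ 2 := by
    intro h2
    obtain ⟨m, -, hum, hme⟩ := exists_isFoot h2
    have hmx : m ≠ x := by
      rintro rfl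
      have := dist_eq_one_iff_adj.2 hum
      omega
    have hm := isFoot_of_adj_of_adj h.cliqueFree hxe hme.symm hmx
    obtain rfl := h.mate_unique hxy hux huw hw.dist_eq_two hum hm.dist_eq_two
    exact hec (h.isFoot_unique hxy hm hw)
  omega

theorem six_le_card_ndbW (h : IsTriangleFreeCubicNDB G) (hxy : G.dist x y = 4)
    (hN : ∀ z, G.Adj x z → z = a ∨ z = c ∨ z = e) (hu : IsFoot G x a u) (hu' : IsFoot G x a u')
    (huu' : u ≠ u') (huw : G.Adj u w) (hw : IsFoot G x c w) (hca : c ≠ a) (hea : e ≠ a)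
    (hec : e ≠ c) (hs : IsFoot G x e s) (hs' : IsFoot G x e s') (hss' : s ≠ s') :
    6 ≤ (ndbW G a u).card := by
  classical
  have hne {s : V} (hs : IsFoot G x e s) : u' ≠ s := by
    rintro rfl
    exact hea (h.isFoot_unique hxy hs hu')
  have hcard : ({x, a, e, u', s, s'} : Finset V).card = 6 := by
    have hus := hne hs
    have hus' := hne hs'
    have hxx := G.dist_self (v := x)
    have hax := hu.dist_base
    have hex := hs.dist_base
    have hu'x := hu'.dist_eq_two
    have hsx := hs.dist_eq_two
    have hs'x := hs'.dist_eq_two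
    grind
  rw [← hcard]
  refine card_le_card fun z hz => mem_ndbW.2 ?_
  simp only [mem_insert, mem_singleton] at hz
  rcases hz with rfl | rfl | rfl | rfl | rfl | rfl
  · rw [G.dist_comm, hu.dist_base, G.dist_comm, hu.dist_eq_two]
    exact Nat.one_lt_two
  · rw [SimpleGraph.dist_self]
    exact h.connected.pos_dist_of_ne hu.adj.ne
  · exact h.dist_foot_lt_dist hxy hu huw hw hs.adj_base hea hec
  · rw [dist_eq_one_iff_adj.2 hu'.adj.symm,
      dist_eq_two_of_adj_of_adj h.cliqueFree hu'.adj.symm hu.adj huu'.symm]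
    exact Nat.one_lt_two
  · exact h.dist_lt_dist_of_isFoot hxy hN hu huw hw hca hea hec hs
  · exact h.dist_lt_dist_of_isFoot hxy hN hu huw hw hca hea hec hs'

theorem dist_ne_four (h : IsTriangleFreeCubicNDB G) (x y : V) : G.dist x y ≠ 4 := by
  intro hxy
  obtain ⟨a, hxa, -⟩ := exists_adj_dist_eq hxy
  obtain ⟨u, u', huu', ⟨hau, hux⟩, hau', hux'⟩ := exists_two_neighbors_ne (h.regular a).ge x
  have hu := isFoot_of_adj_of_adj h.cliqueFree hxa hau hux
  obtain ⟨w, huw, hw⟩ := h.exists_mate hxy hu.dist_eq_two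
  obtain ⟨c, hc⟩ := exists_isFoot ((hw w huw).2 rfl)
  have hca : c ≠ a := by
    rintro rfl
    exact not_adj_of_adj_of_adj h.cliqueFree hau huw hc.adj
  obtain ⟨e, hxe, hea, hec, hN⟩ := exists_third_neighbor (h.regular x) hxa hc.adj_base hca.symm
  obtain ⟨s, s', hss', ⟨hes, hsx⟩, hes', hsx'⟩ := exists_two_neighbors_ne (h.regular e).ge x
  have hu' := isFoot_of_adj_of_adj h.cliqueFree hxa hau' hux'
  have hs := isFoot_of_adj_of_adj h.cliqueFree hxe hes hsx
  have hs' := isFoot_of_adj_of_adj h.cliqueFree hxe hes' hsx'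
  have hcard := h.six_le_card_ndbW hxy hN hu hu' huu' huw hc hca hea hec hs hs' hss'
  rw [h.ndb.card_ndbW hau] at hcard
  omega

end IsTriangleFreeCubicNDB

end TriangleFree

/-- A regular NDB graph with valency `3`, diameter `d ≥ 3` and
`γ = d + 1` has `d ≠ 4`. -/
theorem stmt_10 {V : Type*} [Fintype V] (G : SimpleGraph V) [DecidableRel G.Adj]
    (hconn : G.Connected) (d : ℕ) (hreg : G.IsRegularOfDegree 3)
    (hd : 3 ≤ d) (hdiam : HasDiam G d) (hndb : IsNDB G (d + 1)) :
    d ≠ 4 := by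
  rintro rfl
  obtain ⟨hle, x, y, hxy⟩ := hdiam
  have hfree := cliqueFree_three_of_isNDB_five hconn hreg hndb
  exact IsTriangleFreeCubicNDB.dist_ne_four ⟨hconn, hreg, hndb, hfree, hle⟩ x y hxy
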